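/- Let K be an essentially small pretriangulated category such that Thick(K) is distributive (for all thick subcategories A, B, C: A ∩ thick(B ∪ C) = thick((A ∩ B) ∪ (A ∩ C))). If s is an object of K and M is a thick subcategory of K with s ∉ M, then there exists a meet-prime thick subcategory P of K such that M ⊆ P and s ∉ P. -/

import Mathlib

/-!
By Zorn's lemma there is a thick subcategory `P` maximal among those containing `M` and
avoiding `s`, because a union of a nonempty chain of thick subcategories is thick: every
closure condition has finitely many premises. If `A ∩ B ⊆ P` while neither `A` nor `B` lies in
`P`, maximality puts `s` in both `thickClosure (P ∪ A)` and `thickClosure (P ∪ B)`. By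
distributivity, used twice, the intersection of these two is generated by subsets of `P`, hence `s ∈ P`,
a contradiction.
-/

open CategoryTheory Limits Pretriangulated

universe w v u

variable {C : Type u} [Category.{v} C] [HasZeroObject C] [HasShift C ℤ] [Preadditive C]
  [∀ n : ℤ, (shiftFunctor C n).Additive] [Pretriangulated C]

/-- A thick subcategory of a pretriangulated category, viewed as a class of objects:
it contains the zero objects and is closed under isomorphisms, all shifts, cones
(for every distinguished triangle `X → Y → Z → X⟦1⟧`, if `X` and `Y` lie in the
subcategory then so does `Z`), and direct summands (retracts). -/
structure IsThick (S : Set C) : Prop where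
  zero : ∀ X : C, IsZero X → X ∈ S
  mem_of_iso : ∀ {X Y : C}, (X ≅ Y) → X ∈ S → Y ∈ S
  shift : ∀ (X : C) (n : ℤ), X ∈ S → (X⟦n⟧ : C) ∈ S
  cone : ∀ T, (T ∈ distTriang C) → T.obj₁ ∈ S → T.obj₂ ∈ S → T.obj₃ ∈ S
  retract : ∀ (X Y : C) (s : Y ⟶ X) (r : X ⟶ Y), s ≫ r = 𝟙 Y → X ∈ S → Y ∈ S

/-- `thickClosure A` is the smallest thick subcategory containing `A`, i.e. the
intersection of all thick subcategories containing `A`. -/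
def thickClosure (A : Set C) : Set C := ⋂₀ {S : Set C | IsThick S ∧ A ⊆ S}

theorem thickClosure_isThick (A : Set C) : IsThick (thickClosure A) where
  zero X hX := fun _ hS => hS.1.zero X hX
  mem_of_iso e h := fun S hS => hS.1.mem_of_iso e (h S hS)
  shift X n h := fun S hS => hS.1.shift X n (h S hS)
  cone T hT h₁ h₂ := fun S hS => hS.1.cone T hT (h₁ S hS) (h₂ S hS)
  retract X Y i r hir h := fun S hS => hS.1.retract X Y i r hir (h S hS)

theorem subset_thickClosure (A : Set C) : A ⊆ thickClosure A :=
  fun _ hx _ hS => hS.2 hx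

theorem thickClosure_subset {A S : Set C} (hS : IsThick S) (h : A ⊆ S) :
    thickClosure A ⊆ S :=
  fun _ hx => hx S ⟨hS, h⟩

theorem isThick_sUnion_of_isChain {c : Set (Set C)} (hc : IsChain (· ⊆ ·) c)
    (hne : c.Nonempty) (h : ∀ S ∈ c, IsThick S) : IsThick (⋃₀ c) where
  zero X hX := by
    obtain ⟨S, hS⟩ := hne
    exact ⟨S, hS, (h S hS).zero X hX⟩
  mem_of_iso := by
    rintro X Y e ⟨S, hS, hX⟩
    exact ⟨S, hS, (h S hS).mem_of_iso e hX⟩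
  shift := by
    rintro X n ⟨S, hS, hX⟩
    exact ⟨S, hS, (h S hS).shift X n hX⟩
  cone := by
    rintro T hT ⟨S₁, hS₁, h₁⟩ ⟨S₂, hS₂, h₂⟩
    rcases hc.total hS₁ hS₂ with hle | hle
    · exact ⟨S₂, hS₂, (h S₂ hS₂).cone T hT (hle h₁) h₂⟩
    · exact ⟨S₁, hS₁, (h S₁ hS₁).cone T hT h₁ (hle h₂)⟩
  retract := by
    rintro X Y i r hir ⟨S, hS, hX⟩
    exact ⟨S, hS, (h S hS).retract X Y i r hir hX⟩

/-- If `K` is essentially small and its lattice of thick subcategories is distributive,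
then for every object `s` and thick subcategory `M` with `s ∉ M` there is a meet-prime
thick subcategory `P` with `M ⊆ P` and `s ∉ P`. -/
theorem exists_meetPrime_of_not_mem [EssentiallySmall.{w} C]
    (hdist : ∀ A B C' : Set C, IsThick A → IsThick B → IsThick C' →
      A ∩ thickClosure (B ∪ C') = thickClosure ((A ∩ B) ∪ (A ∩ C')))
    (s : C) (M : Set C) (hM : IsThick M) (hs : s ∉ M) :
    ∃ P : Set C, IsThick P ∧ P ≠ Set.univ ∧
      (∀ A B : Set C, IsThick A → IsThick B → A ∩ B ⊆ P → A ⊆ P ∨ B ⊆ P) ∧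
      M ⊆ P ∧ s ∉ P := by
  obtain ⟨P, hMP, hmax⟩ := zorn_subset_nonempty {S : Set C | IsThick S ∧ s ∉ S}
    (fun c hcS hc hne => ⟨⋃₀ c,
      ⟨isThick_sUnion_of_isChain hc hne fun S hS => (hcS hS).1,
        fun ⟨S, hS, hsS⟩ => (hcS hS).2 hsS⟩,
      fun _ hS => Set.subset_sUnion_of_mem hS⟩) M ⟨hM, hs⟩
  obtain ⟨hP, hsP⟩ := hmax.prop
  have key : ∀ A : Set C, ¬ A ⊆ P → s ∈ thickClosure (P ∪ A) := by
    intro A hA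
    by_contra hsA
    have hle : P ⊆ thickClosure (P ∪ A) :=
      Set.subset_union_left.trans (subset_thickClosure _)
    exact hA ((Set.subset_union_right.trans (subset_thickClosure _)).trans
      (hmax.le_of_ge ⟨thickClosure_isThick _, hsA⟩ hle))
  refine ⟨P, hP, fun h => hsP (h ▸ Set.mem_univ s), ?_, hMP, hsP⟩
  intro A B hA hB hAB
  by_contra! hcon
  have hmem : s ∈ thickClosure (P ∪ A) ∩ thickClosure (P ∪ B) :=
    ⟨key A hcon.1, key B hcon.2⟩
  rw [hdist _ P B (thickClosure_isThick _) hP hB] at hmem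
  refine hsP (thickClosure_subset hP (Set.union_subset Set.inter_subset_right ?_) hmem)
  -- The remaining generators `thickClosure (P ∪ A) ∩ B` lie in `P` by distributivity again.
  rw [Set.inter_comm, hdist B P A hB hP hA]
  exact thickClosure_subset hP
    (Set.union_subset Set.inter_subset_right (Set.inter_comm A B ▸ hAB))
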